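/- arXiv:2006.08588 — 2 statements merged into one kernel-verified Lean document; each statement's English description precedes it below -/
import Mathlib

section
/- Let F be an algebraically closed field and fix n ≥ 1. Let I be the ideal of R = MvPolynomial ((Fin n × Fin n) ⊕ (Fin n × Fin n)) F generated by the n² entries of the commutator X*Y − Y*X of the two generic n×n matrices X and Y. If the radical of I is a prime ideal (i.e. the variety of commuting pairs of n×n matrices is irreducible), then for all commuting n×n matrices A and B over F, the F-vector space dimension of the unital subalgebra generated by A and B is at most n. -/
open Matrix in
theorem cyc_dep {F : Type*} [Field F] {n : ℕ} (z : Fin n) (A : Matrix (Fin n) (Fin n) F)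
    (hA : (Matrix.of fun i k : Fin n => (A ^ (k : ℕ)) i z).det ≠ 0)
    (c : Fin (n + 1) → Matrix (Fin n) (Fin n) F) (hc : ∀ k, Commute (c k) A) :
    ∃ a : Fin (n + 1) → F, a ≠ 0 ∧ ∑ k, a k • c k = 0 := by
  have h1 : ¬ LinearIndependent F (fun k => fun i => c k i z) := by
    intro h
    have := h.fintype_card_le_finrank
    simp at this
  rw [Fintype.not_linearIndependent_iff] at h1
  obtain ⟨a, ha, k, hk⟩ := h1
  refine ⟨a, fun h => hk (by simp [h]), ?_⟩
  set M := ∑ k, a k • c k with hM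
  have hcomm : Commute M A := Commute.sum_left _ _ _ fun k _ => (hc k).smul_left _
  have hz : ∀ i, M i z = 0 := by
    intro i
    have := congrFun ha i
    simpa [hM, Matrix.sum_apply] using this
  set K := (Matrix.of fun i k : Fin n => (A ^ (k : ℕ)) i z) with hK
  have hMK : M * K = 0 := by
    ext i k
    have h2 : (M * K) i k = (M * A ^ (k : ℕ)) i z := by
      simp [Matrix.mul_apply, hK]
    rw [h2, (hcomm.pow_right _).eq, Matrix.mul_apply]
    simp [hz]
  have hu : IsUnit K.det := isUnit_iff_ne_zero.mpr hA
  calc M = M * K * K⁻¹ := by rw [Matrix.mul_assoc, Matrix.mul_nonsing_inv _ hu, Matrix.mul_one]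
    _ = 0 := by rw [hMK, Matrix.zero_mul]

theorem shift_pow {F : Type*} [Field F] {n : ℕ} (hn : 1 ≤ n) (k : ℕ) (hk : k < n) (i : Fin n) :
    ((Matrix.of fun i j : Fin n => if (i : ℕ) = j + 1 then (1 : F) else 0) ^ k) i ⟨0, hn⟩
      = if (i : ℕ) = k then 1 else 0 := by
  induction k generalizing i with
  | zero => simp [Matrix.one_apply, Fin.ext_iff]
  | succ k ih =>
    rw [pow_succ', Matrix.mul_apply]
    rw [Finset.sum_eq_single ⟨k, by omega⟩]
    · rw [ih (by omega)]; simp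
    · intro b _ hb
      rw [ih (by omega), if_neg, mul_zero]
      intro h; exact hb (Fin.ext h)
    · simp

theorem shift_det {F : Type*} [Field F] {n : ℕ} (hn : 1 ≤ n) :
    (Matrix.of fun i k : Fin n =>
      ((Matrix.of fun i j : Fin n => if (i : ℕ) = j + 1 then (1 : F) else 0) ^ (k : ℕ))
        i ⟨0, hn⟩).det ≠ 0 := by
  have : (Matrix.of fun i k : Fin n =>
      ((Matrix.of fun i j : Fin n => if (i : ℕ) = j + 1 then (1 : F) else 0) ^ (k : ℕ))
        i ⟨0, hn⟩) = 1 := by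
    ext i k
    rw [Matrix.of_apply, shift_pow hn _ k.2]
    simp [Matrix.one_apply, Fin.ext_iff]
  rw [this]; simp


/-- Guralnick's derivation of Gerstenhaber's theorem from Motzkin–Taussky: if the variety
`C(2,n)` of commuting pairs of `n × n` matrices over an algebraically closed field `F` is
irreducible (the radical of the commutator-entries ideal is prime), then every commuting
pair of `n × n` matrices over `F` generates a subalgebra of dimension at most `n`. -/
theorem dim_le_of_commuting_pairs_variety_irreducible (F : Type*) [Field F]
    [IsAlgClosed F] (n : ℕ) (hn : 1 ≤ n)
    (X Y : Matrix (Fin n) (Fin n) (MvPolynomial ((Fin n × Fin n) ⊕ (Fin n × Fin n)) F))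
    (hX : ∀ i j, X i j = MvPolynomial.X (Sum.inl (i, j)))
    (hY : ∀ i j, Y i j = MvPolynomial.X (Sum.inr (i, j)))
    (I : Ideal (MvPolynomial ((Fin n × Fin n) ⊕ (Fin n × Fin n)) F))
    (hI : I = Ideal.span {p | ∃ i j, p = (X * Y - Y * X) i j})
    (hprime : I.radical.IsPrime) :
    ∀ A B : Matrix (Fin n) (Fin n) F,
      A * B = B * A →
      Module.finrank F ↥(Algebra.adjoin F {A, B}) ≤ n := by

  intro A B hAB
  by_contra hcon
  push Not at hcon
  set z : Fin n := ⟨0, hn⟩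
  -- evaluation
  let pt : Matrix (Fin n) (Fin n) F → Matrix (Fin n) (Fin n) F →
      ((Fin n × Fin n) ⊕ (Fin n × Fin n)) → F :=
    fun A B => Sum.elim (fun p => A p.1 p.2) (fun p => B p.1 p.2)
  let φ := fun A B : Matrix (Fin n) (Fin n) F =>
    (MvPolynomial.aeval (pt A B) : MvPolynomial ((Fin n × Fin n) ⊕ (Fin n × Fin n)) F →ₐ[F] F)
  have hφX : ∀ A B, (φ A B).mapMatrix X = A := by
    intro A B; ext i j; simp [φ, pt, hX]
  have hφY : ∀ A B, (φ A B).mapMatrix Y = B := by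
    intro A B; ext i j; simp [φ, pt, hY]
  have hrad : ∀ p, p ∈ I.radical ↔ ∀ A B : Matrix (Fin n) (Fin n) F, A * B = B * A →
      φ A B p = 0 := by
    intro p
    rw [← MvPolynomial.vanishingIdeal_zeroLocus_eq_radical (K := F), 
      MvPolynomial.mem_vanishingIdeal_iff]
    have key : ∀ A B : Matrix (Fin n) (Fin n) F, 
        pt A B ∈ MvPolynomial.zeroLocus F I ↔ A * B = B * A := by
      intro A B
      have hent : ∀ i j, φ A B ((X * Y - Y * X) i j) = (A * B - B * A) i j := by
        intro i j
        have : (φ A B).mapMatrix (X * Y - Y * X) = A * B - B * A := by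
          rw [map_sub, map_mul, map_mul, hφX, hφY]
        rw [← this]; rfl
      rw [MvPolynomial.mem_zeroLocus_iff, hI]
      constructor
      · intro h
        rw [← sub_eq_zero]
        ext i j
        rw [← hent]
        exact h _ (Ideal.subset_span ⟨i, j, rfl⟩)
      · intro h q hq
        have : Ideal.span {p | ∃ i j, p = (X * Y - Y * X) i j} ≤ RingHom.ker (φ A B) := by
          rw [Ideal.span_le]
          rintro _ ⟨i, j, rfl⟩
          change φ A B _ = 0
          rw [hent, h]; simp
        exact this hq
    constructor
    · intro h A B hAB
      exact h _ ((key A B).2 hAB)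
    · intro h x hx
      have hx' : x = pt (Matrix.of fun i j => x (Sum.inl (i, j)))
          (Matrix.of fun i j => x (Sum.inr (i, j))) := by
        funext s; rcases s with s | s <;> simp [pt]
      rw [hx'] at hx ⊢
      exact h _ _ ((key _ _).1 hx)
  -- independent elements
  obtain ⟨f, hf⟩ := exists_linearIndependent_of_le_finrank (R := F) (Nat.succ_le_of_lt hcon)
  have hf2 : LinearIndependent F (fun k => (f k : Matrix (Fin n) (Fin n) F)) :=
    hf.map' (Algebra.adjoin F {A, B}).val.toLinearMap
      (LinearMap.ker_eq_bot.2 Subtype.val_injective)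
  have hrange : ∀ k, ∃ p : FreeAlgebra F (Fin 2),
      FreeAlgebra.lift F ![A, B] p = (f k : Matrix (Fin n) (Fin n) F) := by
    intro k
    have h := (f k).2
    have h2 : ({A, B} : Set (Matrix (Fin n) (Fin n) F)) = Set.range ![A, B] := by
      simp [Set.pair_comm]
    generalize (f k : Matrix (Fin n) (Fin n) F) = w at h ⊢
    rw [h2, Algebra.adjoin_range_eq_range_freeAlgebra_lift] at h
    exact h
  choose p hp using hrange
  have hlift : ∀ A B q, (φ A B).mapMatrix (FreeAlgebra.lift F ![X, Y] q)
      = FreeAlgebra.lift F ![A, B] q := by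
    intro A B q
    have : ((φ A B).mapMatrix).comp (FreeAlgebra.lift F ![X, Y])
      = FreeAlgebra.lift F ![A, B] := by
      apply FreeAlgebra.hom_ext
      funext i
      fin_cases i
      · simpa using hφX A B
      · simpa using hφY A B
    exact DFunLike.congr_fun this q
  obtain ⟨L, hL⟩ := LinearMap.exists_leftInverse_of_injective
    (Fintype.linearCombination F (fun k => (f k : Matrix (Fin n) (Fin n) F)))
    (LinearMap.ker_eq_bot.2 (hf2.fintypeLinearCombination_injective))
  have hL' : ∀ l, L (f l : Matrix (Fin n) (Fin n) F) = Pi.single l 1 := by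
    intro l
    have := DFunLike.congr_fun hL (Pi.single l (1 : F))
    simpa using this
  let D : Matrix (Fin (n + 1)) (Fin (n + 1)) (MvPolynomial ((Fin n × Fin n) ⊕ (Fin n × Fin n)) F) :=
    Matrix.of fun k l => ∑ i, ∑ j, MvPolynomial.C (L (Matrix.single i j 1) k) *
      (FreeAlgebra.lift F ![X, Y] (p l)) i j
  have hD : ∀ A B, (φ A B).mapMatrix D =
      Matrix.of fun k l => L (FreeAlgebra.lift F ![A, B] (p l)) k := by
    intro A B
    ext k l
    set W := FreeAlgebra.lift F ![A, B] (p l) with hW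
    have hent : ∀ i j, φ A B ((FreeAlgebra.lift F ![X, Y] (p l)) i j) = W i j := by
      intro i j
      rw [hW, ← hlift]; rfl
    have hLW : L W k = ∑ i, ∑ j, L (Matrix.single i j 1) k * W i j := by
      conv_lhs => rw [Matrix.matrix_eq_sum_single W]
      simp only [map_sum, Finset.sum_apply]
      refine Finset.sum_congr rfl fun i _ => Finset.sum_congr rfl fun j _ => ?_
      have : Matrix.single i j (W i j) = W i j • Matrix.single i j (1 : F) := by
        simp [Matrix.smul_single]
      rw [this, map_smul, Pi.smul_apply, smul_eq_mul, mul_comm]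
    change φ A B (D k l) = L W k
    rw [hLW]
    simp only [D, Matrix.of_apply, map_sum, map_mul, hent]
    simp [φ]
  let G : Matrix (Fin n) (Fin n) (MvPolynomial ((Fin n × Fin n) ⊕ (Fin n × Fin n)) F) :=
    Matrix.of fun i k => (X ^ (k : ℕ)) i z
  have hG : ∀ A B, (φ A B).mapMatrix G = Matrix.of fun i k : Fin n => (A ^ (k : ℕ)) i z := by
    intro A B
    ext i k
    have : (φ A B).mapMatrix (X ^ (k : ℕ)) = A ^ (k : ℕ) := by rw [map_pow, hφX]
    rw [Matrix.of_apply, ← this]; rfl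
  have hmem : D.det * G.det ∈ I.radical := by
    rw [hrad]
    intro A B hAB
    rw [map_mul, AlgHom.map_det, AlgHom.map_det, hD, hG]
    by_cases hg : (Matrix.of fun i k : Fin n => (A ^ (k : ℕ)) i z).det = 0
    · rw [hg, mul_zero]
    · have hc : ∀ k, Commute (FreeAlgebra.lift F ![A, B] (p k)) A := by
        intro k
        have h1 : FreeAlgebra.lift F ![A, B] (p k) ∈ Algebra.adjoin F (Set.range ![A, B]) := by
          rw [Algebra.adjoin_range_eq_range_freeAlgebra_lift]
          exact ⟨_, rfl⟩
        have h2 : Algebra.adjoin F (Set.range ![A, B]) ≤ Subalgebra.centralizer F {A} := by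
          rw [Algebra.adjoin_le_iff]
          rintro _ ⟨i, rfl⟩
          fin_cases i
          · simp [Set.mem_centralizer_iff]
          · simpa [Set.mem_centralizer_iff] using hAB
        exact ((Subalgebra.mem_centralizer_iff F).1 (h2 h1) A rfl).symm
      obtain ⟨a, ha, hs⟩ := cyc_dep z A hg _ hc
      rw [Matrix.exists_mulVec_eq_zero_iff.1, zero_mul]
      refine ⟨a, ha, ?_⟩
      have := congrArg L hs
      rw [map_sum, map_zero] at this
      funext k
      have := congrFun this k
      simpa [Matrix.mulVec, dotProduct, mul_comm] using this
  rcases hprime.mem_or_mem hmem with h | h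
  · have := (hrad _).1 h A B hAB
    rw [AlgHom.map_det, hD] at this
    have h1 : (Matrix.of fun k l => L (FreeAlgebra.lift F ![A, B] (p l)) k) = 1 := by
      ext k l
      simp [hp, hL', Matrix.one_apply, Pi.single_apply]
    rw [h1] at this
    simp at this
  · have := (hrad _).1 h (Matrix.of fun i j : Fin n => if (i : ℕ) = j + 1 then (1 : F) else 0) 0
      (by simp)
    rw [AlgHom.map_det, hG] at this
    exact shift_det hn this
end

section
/- Let F be a field, let r, d ≥ 1, let J be the r×r matrix over F with J i j = 1 if j = i + 1 and J i j = 0 otherwise (the basic nilpotent Jordan matrix), and let W = J ⊗ I_d be the Kronecker product of J with the d×d identity matrix (the nilpotent Weyr matrix of homogeneous Weyr structure (d, d, …, d) with r parts). Then an (rd)×(rd) matrix K over F satisfies K * W = W * K if and only if there exist d×d matrices C₀, C₁, …, C_{r−1} over F such that K = Σ_{m=0}^{r−1} (J^m) ⊗ C_m. -/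
open Kronecker

theorem weyr_J_pow {F : Type*} [Field F] {r : ℕ} (J : Matrix (Fin r) (Fin r) F)
    (hJ : ∀ i j : Fin r, J i j = if (j : ℕ) = (i : ℕ) + 1 then 1 else 0) (m : ℕ) :
    ∀ i j : Fin r, (J ^ m) i j = if (j : ℕ) = (i : ℕ) + m then 1 else 0 := by
  induction m with
  | zero => intro i j; simp [Matrix.one_apply, Fin.ext_iff, eq_comm]
  | succ m ih =>
    intro i j
    rw [pow_succ, Matrix.mul_apply]
    simp only [ih, hJ]
    by_cases h : (j : ℕ) = i + (m + 1)
    · have hlt : (i : ℕ) + m < r := by omega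
      rw [Finset.sum_eq_single (⟨i + m, hlt⟩ : Fin r)]
      · simp [h, add_assoc]
      · intro b _ hb
        have : (b : ℕ) ≠ i + m := fun e => hb (Fin.ext e)
        simp [this]
      · simp
    · rw [if_neg h]
      apply Finset.sum_eq_zero
      intro b _
      by_cases h1 : (b : ℕ) = i + m
      · have : ¬ (j : ℕ) = b + 1 := by omega
        simp [this]
      · simp [h1]

/-- Belitskii's description of the centralizer of a nilpotent Weyr matrix with homogeneous
Weyr structure `(d, d, …, d)` (`r` parts): a matrix `K` commutes with `W = J ⊗ I_d`
(where `J` is the basic `r × r` nilpotent Jordan matrix) if and only if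
`K = Σ_{m=0}^{r-1} J^m ⊗ C_m` for some `d × d` matrices `C₀, …, C_{r-1}`. -/
theorem centralizer_of_homogeneous_weyr_matrix (F : Type*) [Field F]
    (r d : ℕ) (hr : 1 ≤ r) (hd : 1 ≤ d)
    (J : Matrix (Fin r) (Fin r) F)
    (hJ : ∀ i j : Fin r, J i j = if (j : ℕ) = (i : ℕ) + 1 then 1 else 0)
    (W : Matrix (Fin r × Fin d) (Fin r × Fin d) F)
    (hW : W = J ⊗ₖ (1 : Matrix (Fin d) (Fin d) F))
    (K : Matrix (Fin r × Fin d) (Fin r × Fin d) F) :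
    K * W = W * K ↔
      ∃ C : Fin r → Matrix (Fin d) (Fin d) F,
        K = ∑ m : Fin r, (J ^ (m : ℕ)) ⊗ₖ C m := by
  constructor
  · intro h
    have hE : ∀ (i j : Fin r) (a b : Fin d),
        ∑ k, K (i, a) (k, b) * J k j = ∑ k, J i k * K (k, a) (j, b) := by
      intro i j a b
      have := congrFun (congrFun h (i, a)) (j, b)
      simpa [hW, Matrix.mul_apply, Fintype.sum_prod_type, Matrix.kroneckerMap_apply,
        Matrix.one_apply] using this
    have hR : ∀ (n : ℕ) (hn : n + 1 < r) (j : Fin r) (a b : Fin d),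
        ∑ k, J ⟨n, by omega⟩ k * K (k, a) (j, b) = K (⟨n + 1, hn⟩, a) (j, b) := by
      intro n hn j a b
      rw [Finset.sum_eq_single (⟨n + 1, hn⟩ : Fin r)]
      · simp [hJ]
      · intro k _ hk
        have : (k : ℕ) ≠ n + 1 := fun e => hk (Fin.ext e)
        simp [hJ, this]
      · simp
    have hL : ∀ (n : ℕ) (hn : n + 1 < r) (i : Fin r) (a b : Fin d),
        ∑ k, K (i, a) (k, b) * J k ⟨n + 1, hn⟩ = K (i, a) (⟨n, by omega⟩, b) := by
      intro n hn i a b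
      rw [Finset.sum_eq_single (⟨n, by omega⟩ : Fin r)]
      · simp [hJ]
      · intro k _ hk
        have : n ≠ (k : ℕ) := fun e => hk (Fin.ext e.symm)
        simp [hJ, this]
      · simp
    have hT : ∀ (n : ℕ) (hn : n < r) (m : ℕ) (hm : m < r) (a b : Fin d),
        K (⟨n, hn⟩, a) (⟨m, hm⟩, b) =
          if n ≤ m then K (⟨0, hr⟩, a) (⟨m - n, by omega⟩, b) else 0 := by
      intro n
      induction n with
      | zero => intros; simp
      | succ n ih =>
        intro hn m hm a b
        rw [← hR n hn, ← hE]
        cases m with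
        | zero => simp [hJ]
        | succ m =>
          rw [hL m hm, ih]
          simp
    refine ⟨fun m => Matrix.of fun a b => K (⟨0, hr⟩, a) (m, b), ?_⟩
    ext ⟨i, a⟩ ⟨j, b⟩
    rw [Matrix.sum_apply]
    simp only [Matrix.kroneckerMap_apply, weyr_J_pow J hJ, Matrix.of_apply]
    rw [hT i i.2 j j.2]
    split_ifs with hij
    · rw [Finset.sum_eq_single (⟨j - i, by omega⟩ : Fin r)]
      · simp [hij]
      · intro k _ hk
        have : ¬ (j : ℕ) = i + k := fun e => hk (Fin.ext (by simp; omega))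
        simp [this]
      · simp
    · symm
      apply Finset.sum_eq_zero
      intro k _
      have : ¬ (j : ℕ) = i + k := by omega
      simp [this]
  · rintro ⟨C, rfl⟩
    rw [hW, Finset.sum_mul, Finset.mul_sum]
    refine Finset.sum_congr rfl fun m _ => ?_
    rw [← Matrix.mul_kronecker_mul, ← Matrix.mul_kronecker_mul, ← pow_succ, ← pow_succ']
    simp
end
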